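/- arXiv:2210.05653 — 2 statements merged into one kernel-verified Lean document; each statement's English description precedes it below -/
import Mathlib

section
/- Let K be a field, n ≥ 2, and let f(x_1,…,x_m) be a multilinear polynomial over K. Then Im(f) on M_n(K) is contained in sl_n(K), the set of trace-zero matrices, if and only if f satisfies (S2). -/
/-- Evaluation of the multilinear polynomial `f(x₁,…,x_m) = ∑_{σ ∈ S_m} α_σ x_{σ(1)}⋯x_{σ(m)}`
given by coefficients `α` at the tuple `a`. -/
def mlEval {K A : Type} [Field K] [Ring A] [Algebra K A] {m : ℕ}
    (α : Equiv.Perm (Fin m) → K) (a : Fin m → A) : A :=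
  ∑ σ : Equiv.Perm (Fin m), α σ • (List.ofFn fun i => a (σ i)).prod

/-- The image of the multilinear polynomial with coefficients `α` on the algebra `A`. -/
def mlImage {K A : Type} [Field K] [Ring A] [Algebra K A] {m : ℕ}
    (α : Equiv.Perm (Fin m) → K) : Set A :=
  Set.range (mlEval α)

/-- `a` is homogeneous of degree `g` in the Vasilovsky `ZMod n`-grading of `Mₙ(K)`:
`a` lies in the span of the matrix units `E i j` with `j - i ≡ g (mod n)`. -/
def VasHomog {K : Type} [Field K] {n : ℕ} (g : ZMod n)
    (a : Matrix (Fin n) (Fin n) K) : Prop :=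
  ∀ i j : Fin n, ((j.val : ZMod n) - (i.val : ZMod n)) ≠ g → a i j = 0

/-- Statement (S0): `f` vanishes on homogeneous tuples whose degrees sum to `0`. -/
def StmtS0 {K : Type} [Field K] (n : ℕ) {m : ℕ} (α : Equiv.Perm (Fin m) → K) : Prop :=
  ∀ (g : Fin m → ZMod n) (a : Fin m → Matrix (Fin n) (Fin n) K),
    (∀ i, VasHomog (g i) (a i)) → (∑ i, g i) = 0 → mlEval α a = 0

/-- Statement (S1): `f` vanishes on homogeneous tuples whose degrees sum to a nonzero element. -/
def StmtS1 {K : Type} [Field K] (n : ℕ) {m : ℕ} (α : Equiv.Perm (Fin m) → K) : Prop :=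
  ∀ (g : Fin m → ZMod n) (a : Fin m → Matrix (Fin n) (Fin n) K),
    (∀ i, VasHomog (g i) (a i)) → (∑ i, g i) ≠ 0 → mlEval α a = 0

/-- Statement (S2): `f` has trace-zero values on homogeneous tuples whose degrees sum to `0`. -/
def StmtS2 {K : Type} [Field K] (n : ℕ) {m : ℕ} (α : Equiv.Perm (Fin m) → K) : Prop :=
  ∀ (g : Fin m → ZMod n) (a : Fin m → Matrix (Fin n) (Fin n) K),
    (∀ i, VasHomog (g i) (a i)) → (∑ i, g i) = 0 → Matrix.trace (mlEval α a) = 0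

/-- The set of scalar matrices in `Mₙ(K)`. -/
def scalarSet (K : Type) [Field K] (n : ℕ) : Set (Matrix (Fin n) (Fin n) K) :=
  {b | ∃ c : K, b = c • (1 : Matrix (Fin n) (Fin n) K)}

/-- The set `slₙ(K)` of trace-zero matrices in `Mₙ(K)`. -/
def slSet (K : Type) [Field K] (n : ℕ) : Set (Matrix (Fin n) (Fin n) K) :=
  {b | Matrix.trace b = 0}

/-!
The homogeneous components span `Mₙ(K)`, so the multilinear map `tr ∘ f` vanishes as soon as it
vanishes on homogeneous tuples. On such a tuple `f` is homogeneous, of degree the sum of the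
degrees, because the grading group is commutative and every monomial of `f` has the same degree.
Diagonal matrix units have degree `0`, so the trace of a homogeneous matrix of nonzero degree
vanishes, and only the tuples considered in (S2) remain.
-/

theorem multilinearMap_ext_of_span_eq_top {R κ N : Type*} {M : κ → Type*} [CommSemiring R]
    [∀ k, AddCommMonoid (M k)] [∀ k, Module R (M k)] [AddCommMonoid N] [Module R N] [Finite κ]
    {f g : MultilinearMap R M N} {s : ∀ k, Set (M k)} (hs : ∀ k, Submodule.span R (s k) = ⊤)
    (hfg : ∀ v, (∀ k, v k ∈ s k) → f v = g v) : f = g := by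
  let π : ∀ k, (s k →₀ R) →ₗ[R] M k := fun k ↦ Finsupp.linearCombination R Subtype.val
  have hπ : ∀ k, Function.Surjective (π k) := fun k ↦ by
    rw [← LinearMap.range_eq_top, Finsupp.range_linearCombination, Subtype.range_coe, hs]
  have hcomp : f.compLinearMap π = g.compLinearMap π :=
    Module.Basis.ext_multilinear (fun _ ↦ Finsupp.basisSingleOne) fun v ↦ by
      simpa [π] using hfg (fun k ↦ v k) fun k ↦ (v k).2
  ext a
  obtain ⟨b, rfl⟩ := Function.Surjective.piMap hπ a
  exact DFunLike.congr_fun hcomp b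

section MultilinearPolynomial

variable {R A : Type*} [CommSemiring R] [Semiring A] [Algebra R A] {m : ℕ}

/-- The multilinear polynomial `∑_σ α_σ x_{σ(1)}⋯x_{σ(m)}`, as a multilinear map on an algebra `A`;
over a field its values are those of `mlEval`. -/
def multilinearPolynomial (α : Equiv.Perm (Fin m) → R) :
    MultilinearMap R (fun _ : Fin m ↦ A) A :=
  ∑ σ : Equiv.Perm (Fin m), α σ • (MultilinearMap.mkPiAlgebraFin R m A).domDomCongr σ

theorem multilinearPolynomial_apply (α : Equiv.Perm (Fin m) → R) (a : Fin m → A) :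
    multilinearPolynomial α a =
      ∑ σ : Equiv.Perm (Fin m), α σ • (List.ofFn fun i ↦ a (σ i)).prod := by
  simp [multilinearPolynomial]

theorem coe_multilinearPolynomial {K A : Type} [Field K] [Ring A] [Algebra K A]
    (α : Equiv.Perm (Fin m) → K) : ⇑(multilinearPolynomial (A := A) α) = mlEval α :=
  funext (multilinearPolynomial_apply α)

variable {G : Type*} [AddCommMonoid G] (𝒜 : G → Submodule R A) [SetLike.GradedMonoid 𝒜]

theorem multilinearPolynomial_mem_graded (α : Equiv.Perm (Fin m) → R) {g : Fin m → G}
    {a : Fin m → A} (ha : ∀ i, a i ∈ 𝒜 (g i)) :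
    multilinearPolynomial α a ∈ 𝒜 (∑ i, g i) := by
  rw [multilinearPolynomial_apply]
  refine Submodule.sum_mem _ fun σ _ ↦ Submodule.smul_mem _ _ ?_
  rw [← Equiv.sum_comp σ g, ← List.sum_ofFn]
  exact SetLike.list_prod_ofFn_mem_graded _ _ fun i ↦ ha (σ i)

theorem stmt_3_general {M : Type*} [AddCommMonoid M] [Module R M] (h𝒜 : ⨆ g, 𝒜 g = ⊤)
    (φ : A →ₗ[R] M) (hφ : ∀ g ≠ 0, 𝒜 g ≤ LinearMap.ker φ) (α : Equiv.Perm (Fin m) → R) :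
    Set.range (multilinearPolynomial α) ⊆ (LinearMap.ker φ : Set A) ↔
      ∀ (g : Fin m → G) (a : Fin m → A), (∀ i, a i ∈ 𝒜 (g i)) → ∑ i, g i = 0 →
        φ (multilinearPolynomial α a) = 0 := by
  refine ⟨fun h _ a _ _ ↦ h ⟨a, rfl⟩, fun h ↦ ?_⟩
  suffices hzero : φ.compMultilinearMap (multilinearPolynomial α) = 0 by
    rintro _ ⟨a, rfl⟩
    exact DFunLike.congr_fun hzero a
  refine multilinearMap_ext_of_span_eq_top
    (fun _ ↦ (Submodule.iSup_eq_span 𝒜).symm.trans h𝒜) fun a ha ↦ ?_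
  choose g hg using fun i ↦ Set.mem_iUnion.mp (ha i)
  by_cases hsum : ∑ i, g i = 0
  · exact h g a hg hsum
  · exact hφ _ hsum (multilinearPolynomial_mem_graded 𝒜 α hg)

end MultilinearPolynomial

section ElementaryGrading

variable {ι G R : Type*} [AddCommGroup G] [Semiring R] (d : ι → G)

/-- The component of degree `g` of the elementary grading of `Matrix ι ι R` defined by the weights
`d`, in which the matrix unit `E i j` has degree `d j - d i`. The Vasilovsky grading is the case of
the weights `i ↦ (i : ZMod n)` on `Fin n`. -/
def elementaryGrading (g : G) : Submodule R (Matrix ι ι R) where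
  carrier := {a | ∀ i j, d j - d i ≠ g → a i j = 0}
  zero_mem' _ _ _ := rfl
  add_mem' ha hb i j hij := by rw [Matrix.add_apply, ha i j hij, hb i j hij, add_zero]
  smul_mem' c a ha i j hij := by rw [Matrix.smul_apply, ha i j hij, smul_zero]

theorem single_mem_elementaryGrading [DecidableEq ι] (i j : ι) (c : R) :
    Matrix.single i j c ∈ elementaryGrading d (d j - d i) := by
  intro k l hkl
  apply Matrix.single_apply_of_ne
  rintro ⟨rfl, rfl⟩
  exact hkl rfl

theorem iSup_elementaryGrading_eq_top [Finite ι] :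
    ⨆ g, (elementaryGrading d g : Submodule R (Matrix ι ι R)) = ⊤ := by
  classical
  cases nonempty_fintype ι
  refine eq_top_iff.mpr fun a _ ↦ ?_
  rw [Matrix.matrix_eq_sum_single a]
  exact Submodule.sum_mem _ fun i _ ↦ Submodule.sum_mem _ fun j _ ↦
    Submodule.mem_iSup_of_mem _ (single_mem_elementaryGrading d i j (a i j))

variable [Fintype ι]

instance elementaryGrading.gradedMonoid [DecidableEq ι] :
    SetLike.GradedMonoid (elementaryGrading d : G → Submodule R (Matrix ι ι R)) where
  one_mem i j hij := Matrix.one_apply_ne fun h ↦ hij (by rw [h, sub_self])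
  mul_mem g h a b ha hb i j hij := by
    rw [Matrix.mul_apply]
    refine Finset.sum_eq_zero fun k _ ↦ ?_
    by_cases hik : d k - d i = g
    · have hkj : d j - d k ≠ h := by
        rintro rfl
        exact hij (by rw [← hik, sub_add_sub_cancel'])
      rw [hb k j hkj, mul_zero]
    · rw [ha i k hik, zero_mul]

theorem elementaryGrading_le_ker_trace {g : G} (hg : g ≠ 0) :
    elementaryGrading d g ≤ LinearMap.ker (Matrix.traceLinearMap ι R R) :=
  fun _ ha ↦ Finset.sum_eq_zero fun i _ ↦ ha i i (by rwa [sub_self, ne_comm])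

end ElementaryGrading

theorem mem_elementaryGrading_iff_vasHomog {K : Type} [Field K] {n : ℕ} {g : ZMod n}
    {a : Matrix (Fin n) (Fin n) K} :
    a ∈ elementaryGrading (fun i : Fin n ↦ (i.val : ZMod n)) g ↔ VasHomog g a :=
  Iff.rfl

/-- the image of a multilinear polynomial on `Mₙ(K)` is contained in `slₙ(K)`
iff `f` satisfies (S2). -/
theorem stmt_3 {K : Type} [Field K] (n : ℕ) (hn : 2 ≤ n) {m : ℕ}
    (α : Equiv.Perm (Fin m) → K) :
    (mlImage α : Set (Matrix (Fin n) (Fin n) K)) ⊆ slSet K n ↔ StmtS2 n α := by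
  have h := stmt_3_general _ (iSup_elementaryGrading_eq_top fun i : Fin n ↦ (i.val : ZMod n))
    (Matrix.traceLinearMap (Fin n) K K) (fun _ ↦ elementaryGrading_le_ker_trace _) α
  simp only [coe_multilinearPolynomial, mem_elementaryGrading_iff_vasHomog] at h
  exact h
end

section
/- Let K be a field, n ≥ 2, and let f(x_1,…,x_m) be a multilinear polynomial over K. Then f does not satisfy (S1) and satisfies (S2) if and only if the K-linear span of Im(f) on M_n(K) equals sl_n(K). -/
section ElementaryGrading

variable {R G ι : Type*} [CommSemiring R] [AddCommGroup G]

/-- The component of degree `g` of the elementary grading of `M_ι(R)` attached to a potential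
`φ : ι → G`, in which the matrix unit `E i j` has degree `φ j - φ i`. -/
def elementaryComponent (φ : ι → G) (g : G) : Submodule R (Matrix ι ι R) where
  carrier := {a | ∀ i j, φ j - φ i ≠ g → a i j = 0}
  add_mem' ha hb i j h := by simp [ha i j h, hb i j h]
  zero_mem' _ _ _ := rfl
  smul_mem' c a ha i j h := by simp [ha i j h]

instance [Fintype ι] [DecidableEq ι] (φ : ι → G) :
    SetLike.GradedMonoid (elementaryComponent (R := R) φ) where
  one_mem i j h := Matrix.one_apply_ne fun hij ↦ h (by simp [hij])
  mul_mem g h a b ha hb i j hij := by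
    rw [Matrix.mul_apply]
    refine Finset.sum_eq_zero fun k _ ↦ ?_
    by_cases hik : φ k - φ i = g
    · have hkj : φ j - φ k ≠ h := fun hkj ↦ hij (by rw [← hik, ← hkj]; abel)
      rw [hb k j hkj, mul_zero]
    · rw [ha i k hik, zero_mul]

theorem single_mem_elementaryComponent [DecidableEq ι] (φ : ι → G) (i j : ι) (c : R) :
    Matrix.single i j c ∈ elementaryComponent φ (φ j - φ i) := fun k l h ↦
  Matrix.single_apply_of_ne _ _ _ _ _ (by rintro ⟨rfl, rfl⟩; exact h rfl)

theorem mem_elementaryComponent_zero_iff_isDiag {φ : ι → G} (hφ : Function.Injective φ)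
    {a : Matrix ι ι R} : a ∈ elementaryComponent φ 0 ↔ a.IsDiag :=
  forall₂_congr fun i j ↦ by rw [sub_ne_zero, hφ.ne_iff, ne_comm]

theorem eq_zero_of_mem_elementaryComponent_of_ne {φ : ι → G} {g h : G} (hgh : g ≠ h)
    {a : Matrix ι ι R} (hg : a ∈ elementaryComponent φ g) (hh : a ∈ elementaryComponent φ h) :
    a = 0 := by
  ext i j
  by_cases hij : φ j - φ i = g
  · exact hh i j (hij ▸ hgh)
  · exact hg i j hij

theorem trace_eq_zero_of_mem_elementaryComponent [Fintype ι] {φ : ι → G} {g : G} (hg : g ≠ 0)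
    {a : Matrix ι ι R} (ha : a ∈ elementaryComponent φ g) : a.trace = 0 :=
  Finset.sum_eq_zero fun i _ ↦ ha i i (by simpa using hg.symm)

theorem eq_single_of_mem_elementaryComponent_piSingle [DecidableEq ι] {g : ι → ℤ}
    {a : Matrix ι ι R} (ha : a ∈ elementaryComponent (fun i ↦ Pi.single i 1) g) {i j : ι}
    (hij : i ≠ j) (hne : a i j ≠ 0) : a = Matrix.single i j (a i j) := by
  have hg : Pi.single j 1 - Pi.single i 1 = g := not_imp_comm.1 (ha i j) hne
  ext k l
  by_cases hkl : i = k ∧ j = l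
  · obtain ⟨rfl, rfl⟩ := hkl
    rw [Matrix.single_apply_same]
  · rw [Matrix.single_apply_of_ne _ _ _ _ _ hkl]
    refine ha k l fun h ↦ hkl ?_
    rw [← hg, sub_eq_sub_iff_add_eq_add,
      Pi.single_add_single_eq_single_add_single one_ne_zero one_ne_zero] at h
    grind

end ElementaryGrading

section AutomorphismInvariant

variable {R ι : Type*} [CommRing R] [Fintype ι] [DecidableEq ι] {W : Submodule R (Matrix ι ι R)}

theorem ker_traceLinearMap_le_of_single_mem (hoff : ∀ i j, i ≠ j → Matrix.single i j 1 ∈ W)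
    (hdiag : ∀ i j, i ≠ j → Matrix.single i i 1 - Matrix.single j j 1 ∈ W) :
    LinearMap.ker (Matrix.traceLinearMap ι R R) ≤ W := by
  intro b hb
  cases isEmpty_or_nonempty ι with
  | inl _ => simp [Subsingleton.elim b 0]
  | inr hι =>
    obtain ⟨z⟩ := hι
    have mkQ_eq : W.mkQ = LinearMap.toSpanSingleton R _ (W.mkQ (Matrix.single z z 1)) ∘ₗ
        Matrix.traceLinearMap ι R R := by
      refine Matrix.ext_linearMap (R := R) fun i j ↦ LinearMap.ext_ring ?_
      by_cases hij : i = j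
      · subst hij
        by_cases hiz : i = z
        · simp [hiz]
        · simpa [Submodule.Quotient.eq] using hdiag i z hiz
      · simpa [hij] using hoff i j hij
    rw [← W.ker_mkQ, LinearMap.mem_ker, mkQ_eq, LinearMap.comp_apply, LinearMap.mem_ker.1 hb,
      map_zero]

variable (hW : ∀ e : Matrix ι ι R ≃ₐ[R] Matrix ι ι R, Set.MapsTo e W W)
include hW

theorem single_mem_of_mapsTo_algEquiv {i j k l : ι} (hij : i ≠ j) (hkl : k ≠ l)
    (h : Matrix.single i j 1 ∈ W) : Matrix.single k l 1 ∈ W := by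
  obtain ⟨σ, rfl, rfl⟩ := MulAction.is_two_pretransitive_iff.1
    (Equiv.Perm.isMultiplyPretransitive ι 2) hij hkl
  simpa using hW (Matrix.reindexAlgEquiv R R σ) h

theorem single_sub_single_mem_of_mapsTo_algEquiv {i j : ι} (hij : i ≠ j)
    (h : Matrix.single i j 1 ∈ W) : Matrix.single i i 1 - Matrix.single j j 1 ∈ W := by
  let t : (Matrix ι ι R)ˣ :=
    ⟨Matrix.transvection j i 1, Matrix.transvection j i (-1),
      by simp [Matrix.transvection_mul_transvection_same, hij.symm],
      by simp [Matrix.transvection_mul_transvection_same, hij.symm]⟩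
  have hconj : Matrix.transvection j i 1 * Matrix.single i j 1 * Matrix.transvection j i (-1) ∈ W :=
    hW (MulSemiringAction.toAlgEquiv R _ (ConjAct.toConjAct t)) h
  have hji : Matrix.single j i 1 ∈ W := single_mem_of_mapsTo_algEquiv hW hij hij.symm h
  have conj_eq : Matrix.transvection j i 1 * Matrix.single i j (1 : R) *
      Matrix.transvection j i (-1) = Matrix.single i j 1 - Matrix.single j i 1 -
        (Matrix.single i i 1 - Matrix.single j j 1) := by
    simp only [Matrix.transvection, add_mul, mul_add, one_mul, mul_one,
      Matrix.single_mul_single_same, mul_neg, ← Matrix.single_neg]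
    abel
  rw [conj_eq] at hconj
  simpa using sub_mem (sub_mem h hji) hconj

theorem ker_traceLinearMap_le_of_mapsTo_algEquiv {i j : ι} (hij : i ≠ j)
    (h : Matrix.single i j 1 ∈ W) : LinearMap.ker (Matrix.traceLinearMap ι R R) ≤ W :=
  have hoff {k l : ι} (hkl : k ≠ l) := single_mem_of_mapsTo_algEquiv hW hij hkl h
  ker_traceLinearMap_le_of_single_mem (fun _ _ hkl ↦ hoff hkl)
    fun _ _ hkl ↦ single_sub_single_mem_of_mapsTo_algEquiv hW hkl (hoff hkl)

end AutomorphismInvariant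

theorem multilinearMap_apply_mem_of_basis {R κ ι M N : Type*} [CommRing R] [AddCommGroup M]
    [Module R M] [AddCommGroup N] [Module R N] [Finite κ]
    (F : MultilinearMap R (fun _ : κ ↦ M) N) (b : Module.Basis ι R M) {W : Submodule R N}
    (h : ∀ p : κ → ι, F (fun k ↦ b (p k)) ∈ W) (x : κ → M) : F x ∈ W := by
  have mkQ_comp_eq_zero : W.mkQ.compMultilinearMap F = 0 :=
    Module.Basis.ext_multilinear (fun _ ↦ b) fun p ↦ by simpa using h p
  simpa using DFunLike.congr_fun mkQ_comp_eq_zero x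

section Evaluation

variable {K A : Type} [Field K] [Ring A] [Algebra K A] {m : ℕ} (α : Equiv.Perm (Fin m) → K)

/-- The multilinear map `a ↦ f(a₁,…,a_m)` given by the multilinear polynomial `f` with
coefficients `α`. -/
noncomputable def mlMap : MultilinearMap K (fun _ : Fin m ↦ A) A :=
  ∑ σ : Equiv.Perm (Fin m), α σ • (MultilinearMap.mkPiAlgebraFin K m A).domDomCongr σ

theorem mlMap_apply (a : Fin m → A) : mlMap α a = mlEval α a := by
  simp [mlMap, mlEval]

theorem map_mlEval {B : Type} [Ring B] [Algebra K B] (e : A →ₐ[K] B) (a : Fin m → A) :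
    e (mlEval α a) = mlEval α (e ∘ a) := by
  simp [mlEval, map_list_prod, List.map_ofFn, Function.comp_def]

theorem mapsTo_span_mlImage (e : A →ₐ[K] A) :
    Set.MapsTo e (Submodule.span K (mlImage α : Set A)) (Submodule.span K (mlImage α : Set A)) := by
  suffices Submodule.span K (mlImage α : Set A) ≤ (Submodule.span K (mlImage α)).comap e.toLinearMap
    from this
  rw [Submodule.span_le]
  rintro _ ⟨a, rfl⟩
  exact Submodule.subset_span ⟨e ∘ a, (map_mlEval α e a).symm⟩

theorem mlEval_mem_graded {G : Type*} [AddCommMonoid G] (𝒜 : G → Submodule K A)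
    [SetLike.GradedMonoid 𝒜] {g : Fin m → G} {a : Fin m → A} (ha : ∀ k, a k ∈ 𝒜 (g k)) :
    mlEval α a ∈ 𝒜 (∑ k, g k) := by
  refine sum_mem fun σ _ ↦ Submodule.smul_mem _ _ ?_
  have hprod := SetLike.list_prod_ofFn_mem_graded (A := 𝒜) (fun k ↦ g (σ k)) _ fun k ↦ ha (σ k)
  rwa [List.sum_ofFn, Equiv.sum_comp σ g] at hprod

end Evaluation

section MatrixEvaluation

variable {K ι : Type} [Field K] [Fintype ι] [DecidableEq ι] {m : ℕ} {α : Equiv.Perm (Fin m) → K}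

theorem mlEval_mem_of_single {W : Submodule K (Matrix ι ι K)}
    (h : ∀ p : Fin m → ι × ι, mlEval α (fun k ↦ Matrix.single (p k).1 (p k).2 1) ∈ W)
    (a : Fin m → Matrix ι ι K) : mlEval α a ∈ W := by
  rw [← mlMap_apply]
  refine multilinearMap_apply_mem_of_basis _ (Matrix.stdBasis K ι ι) (fun p ↦ ?_) a
  simpa only [mlMap_apply, ← Matrix.stdBasis_eq_single, Prod.mk.eta] using h p

theorem mlEval_mem_of_homogeneous {G : Type*} [AddCommGroup G] (φ : ι → G)
    {W : Submodule K (Matrix ι ι K)}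
    (h : ∀ (g : Fin m → G) (a : Fin m → Matrix ι ι K),
      (∀ k, a k ∈ elementaryComponent φ (g k)) → mlEval α a ∈ W)
    (a : Fin m → Matrix ι ι K) : mlEval α a ∈ W :=
  mlEval_mem_of_single (fun _ ↦ h _ _ fun _ ↦ single_mem_elementaryComponent φ _ _ 1) a

theorem forall_homogeneous_mlEval_eq_zero_iff_isDiag {G : Type*} [AddCommGroup G] {φ : ι → G}
    (hφ : Function.Injective φ) :
    (∀ (g : Fin m → G) (a : Fin m → Matrix ι ι K),
      (∀ k, a k ∈ elementaryComponent φ (g k)) → ∑ k, g k ≠ 0 → mlEval α a = 0) ↔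
      ∀ a : Fin m → Matrix ι ι K, (mlEval α a).IsDiag := by
  simp only [← mem_elementaryComponent_zero_iff_isDiag hφ]
  refine ⟨fun h ↦ mlEval_mem_of_homogeneous φ fun g a ha ↦ ?_, fun h g a ha hg ↦
    eq_zero_of_mem_elementaryComponent_of_ne hg
      (mlEval_mem_graded α (elementaryComponent φ) ha) (h a)⟩
  by_cases hg : ∑ k, g k = 0
  · exact hg ▸ mlEval_mem_graded α (elementaryComponent φ) ha
  · exact h g a ha hg ▸ zero_mem _

theorem forall_homogeneous_trace_mlEval_eq_zero_iff {G : Type*} [AddCommGroup G] (φ : ι → G) :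
    (∀ (g : Fin m → G) (a : Fin m → Matrix ι ι K),
      (∀ k, a k ∈ elementaryComponent φ (g k)) → ∑ k, g k = 0 → (mlEval α a).trace = 0) ↔
      ∀ a : Fin m → Matrix ι ι K, (mlEval α a).trace = 0 := by
  refine ⟨fun h ↦ mlEval_mem_of_homogeneous φ
    (W := LinearMap.ker (Matrix.traceLinearMap ι K K)) fun g a ha ↦ ?_, fun h _ a _ _ ↦ h a⟩
  by_cases hg : ∑ k, g k = 0
  · exact h g a ha hg
  · exact trace_eq_zero_of_mem_elementaryComponent hg
      (mlEval_mem_graded α (elementaryComponent φ) ha)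

theorem exists_single_mem_span_mlImage (h : ¬ ∀ a : Fin m → Matrix ι ι K, (mlEval α a).IsDiag) :
    ∃ i j : ι, i ≠ j ∧
      Matrix.single i j 1 ∈ Submodule.span K (mlImage α : Set (Matrix ι ι K)) := by
  let φ : ι → ι → ℤ := fun i ↦ Pi.single i 1
  have hφ : Function.Injective φ := fun i j hij ↦ by
    simpa [φ, Pi.single_apply] using congrFun hij i
  obtain ⟨p, hp⟩ : ∃ p : Fin m → ι × ι,
      ¬ (mlEval α fun k ↦ Matrix.single (p k).1 (p k).2 (1 : K)).IsDiag := by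
    contrapose! h
    simp only [← mem_elementaryComponent_zero_iff_isDiag hφ] at h ⊢
    exact mlEval_mem_of_single h
  set b := mlEval α fun k ↦ Matrix.single (p k).1 (p k).2 (1 : K)
  obtain ⟨i, j, hij, hne⟩ : ∃ i j, i ≠ j ∧ b i j ≠ 0 := by
    simpa [Matrix.IsDiag, Pairwise] using hp
  have b_eq : b = Matrix.single i j (b i j) :=
    eq_single_of_mem_elementaryComponent_piSingle
      (mlEval_mem_graded α (elementaryComponent φ) fun _ ↦ single_mem_elementaryComponent φ _ _ 1)
      hij hne
  have single_eq : Matrix.single i j 1 = (b i j)⁻¹ • b := by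
    rw [b_eq, Matrix.smul_single, Matrix.single_apply_same, smul_eq_mul, inv_mul_cancel₀ hne]
  exact ⟨i, j, hij, single_eq ▸ Submodule.smul_mem _ _ (Submodule.subset_span ⟨_, rfl⟩)⟩

theorem span_mlImage_eq_ker_traceLinearMap_iff [Nontrivial ι] :
    Submodule.span K (mlImage α) = LinearMap.ker (Matrix.traceLinearMap ι K K) ↔
      (¬ ∀ a : Fin m → Matrix ι ι K, (mlEval α a).IsDiag) ∧
        ∀ a : Fin m → Matrix ι ι K, (mlEval α a).trace = 0 := by
  have span_le_iff {W : Submodule K (Matrix ι ι K)} :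
      Submodule.span K (mlImage α) ≤ W ↔ ∀ a, mlEval α a ∈ W := by
    rw [Submodule.span_le, mlImage, Set.range_subset_iff]; rfl
  constructor
  · intro h
    refine ⟨fun hdiag ↦ ?_, span_le_iff.1 h.le⟩
    obtain ⟨i, j, hij⟩ := exists_pair_ne ι
    have hsingle : Matrix.single i j 1 ∈ Submodule.span K (mlImage α : Set (Matrix ι ι K)) := by
      simp [h, hij]
    have hker : Submodule.span K (mlImage α) ≤ LinearMap.ker (Matrix.entryLinearMap K K i j) :=
      span_le_iff.2 fun a ↦ hdiag a hij
    simpa using hker hsingle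
  · rintro ⟨hdiag, htrace⟩
    obtain ⟨i, j, hij, hsingle⟩ := exists_single_mem_span_mlImage hdiag
    exact le_antisymm (span_le_iff.2 htrace)
      (ker_traceLinearMap_le_of_mapsTo_algEquiv (fun e ↦ mapsTo_span_mlImage α e.toAlgHom)
        hij hsingle)

end MatrixEvaluation

section Vasilovsky

variable {K : Type} [Field K] {n m : ℕ} {α : Equiv.Perm (Fin m) → K}

/-- The potential `i ↦ i mod n`, whose elementary grading is the Vasilovsky grading of `Mₙ(K)`. -/
def vasilovskyPotential (n : ℕ) (i : Fin n) : ZMod n :=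
  (i.val : ZMod n)

theorem vasilovskyPotential_injective (n : ℕ) : Function.Injective (vasilovskyPotential n) :=
  fun i j h ↦ Fin.ext (CharP.natCast_injOn_Iio (ZMod n) n i.isLt j.isLt h)

theorem stmtS1_iff_forall_isDiag :
    StmtS1 n α ↔ ∀ a : Fin m → Matrix (Fin n) (Fin n) K, (mlEval α a).IsDiag :=
  forall_homogeneous_mlEval_eq_zero_iff_isDiag (vasilovskyPotential_injective n)

theorem stmtS2_iff_forall_trace_eq_zero :
    StmtS2 n α ↔ ∀ a : Fin m → Matrix (Fin n) (Fin n) K, (mlEval α a).trace = 0 :=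
  forall_homogeneous_trace_mlEval_eq_zero_iff (vasilovskyPotential n)

end Vasilovsky

/-- a multilinear polynomial fails (S1) and satisfies (S2) iff the linear span of
its image on `Mₙ(K)` equals `slₙ(K)`. -/
theorem stmt_7 {K : Type} [Field K] (n : ℕ) (hn : 2 ≤ n) {m : ℕ}
    (α : Equiv.Perm (Fin m) → K) :
    (¬ StmtS1 n α ∧ StmtS2 n α) ↔
      (Submodule.span K (mlImage α : Set (Matrix (Fin n) (Fin n) K)) :
        Set (Matrix (Fin n) (Fin n) K)) = slSet K n := by
  have : Nontrivial (Fin n) := Fin.nontrivial_iff_two_le.2 hn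
  rw [stmtS1_iff_forall_isDiag, stmtS2_iff_forall_trace_eq_zero,
    ← span_mlImage_eq_ker_traceLinearMap_iff, ← SetLike.coe_set_eq]
  rfl
end
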